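/- arXiv:math/0307004 — 2 statements merged into one kernel-verified Lean document; each statement's English description precedes it below -/
import Mathlib

section
/- Let G be a connected open subset of ℝ^N and v a nontrivial real-valued solution of Δv + k²v = 0 on G. Let A₁,…,Aₙ be finitely many nodal domains of v and A the interior of the closure of their union. Then for every x ∈ ∂A ∩ G and every r > 0 with B_r(x) ⊆ G, there exists y ∈ B_r(x) ∩ ∂A with ∇v(y) ≠ 0. -/
open Metric Set

noncomputable def lap {N : ℕ} (v : EuclideanSpace ℝ (Fin N) → ℝ)
    (x : EuclideanSpace ℝ (Fin N)) : ℝ :=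
  ∑ i, iteratedFDeriv ℝ 2 v x ![EuclideanSpace.single i 1, EuclideanSpace.single i 1]

/- If `∇v` vanished on `B ∩ ∂A`, then `B ∩ ∂A` would consist of singular zeros of `v`. On the one
hand `∂A` separates the ball `B`: projecting along a segment of `B` that joins `A` to the complement
of its closure shows that `B ∩ ∂A` has Hausdorff dimension at least `N - 1`. On the other hand, at a
singular zero `p` let `n + 2` be the order of the first nonzero derivative of `v`. Then `U = Dⁿv`
solves the same Helmholtz equation with `U(p) = 0`, so `D²U(p)` is a nonzero symmetric bilinear map
of trace `ΔU(p) = 0`, hence of rank at least `2`, and `{DU = 0}` has dimension at most `N - 2` near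
`p`. As Hausdorff dimension is local and countably stable, sorting the singular zeros by `n` bounds
the dimension of the whole set by `N - 2`. -/

open Module InnerProductSpace Laplacian
open scoped ContDiff Topology ENNReal

section LinearAlgebra

theorem exists_forall_eq_smul_of_finrank_le_finrank_ker_add_one {K V W : Type*} [DivisionRing K]
    [AddCommGroup V] [Module K V] [FiniteDimensional K V] [AddCommGroup W] [Module K W]
    (f : V →ₗ[K] W) (hf : finrank K V ≤ finrank K f.ker + 1) :
    ∃ e, ∀ x, ∃ c : K, f x = c • f e := by
  have hrange : finrank K f.range ≤ 1 := by
    have := f.finrank_range_add_finrank_ker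
    lia
  obtain ⟨⟨_, e, rfl⟩, he⟩ := finrank_le_one_iff.1 hrange
  refine ⟨e, fun x => ?_⟩
  obtain ⟨c, hc⟩ := he ⟨f x, x, rfl⟩
  exact ⟨c, (congrArg Subtype.val hc).symm⟩

theorem finrank_ker_add_two_le_of_sum_apply_self_eq_zero {K V W ι : Type*} [Field K]
    [LinearOrder K] [IsStrictOrderedRing K] [AddCommGroup V] [Module K V] [FiniteDimensional K V]
    [AddCommGroup W] [Module K W] [Fintype ι] (b : Basis ι K V) {B : V →ₗ[K] V →ₗ[K] W}
    (hsymm : ∀ x y, B x y = B y x) (hB : B ≠ 0) (htrace : ∑ i, B (b i) (b i) = 0) :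
    finrank K B.ker + 2 ≤ finrank K V := by
  by_contra! hker
  obtain ⟨e, he⟩ := exists_forall_eq_smul_of_finrank_le_finrank_ker_add_one B (by lia)
  choose c hc using he
  have hB_eq : ∀ x y, B x y = (c x * c y) • B e e := fun x y => by
    rw [hc, LinearMap.smul_apply, hsymm, hc, LinearMap.smul_apply, smul_smul]
  have htrace' : (∑ i, c (b i) * c (b i)) • B e e = 0 := by
    rw [Finset.sum_smul, ← htrace]
    exact Finset.sum_congr rfl fun i _ => (hB_eq _ _).symm
  rcases smul_eq_zero.1 htrace' with hc0 | he0
  · refine hB (b.ext fun i => ?_)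
    have hci : c (b i) = 0 := mul_self_eq_zero.1 <|
      (Finset.sum_eq_zero_iff_of_nonneg fun i _ => mul_self_nonneg _).1 hc0 i (Finset.mem_univ i)
    rw [hc, hci, zero_smul, LinearMap.zero_apply]
  · exact hB (LinearMap.ext₂ fun x y => by rw [hB_eq, he0, smul_zero]; rfl)

end LinearAlgebra

section HausdorffDimension

variable {E F : Type*} [NormedAddCommGroup E] [NormedSpace ℝ E] [FiniteDimensional ℝ E]
  [NormedAddCommGroup F] [NormedSpace ℝ F]

theorem exists_mem_nhds_antilipschitzWith_domRestrict {f : E → F} {f' : E →L[ℝ] F} {x : E}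
    (hf : HasStrictFDerivAt f f' x) (hf' : f'.ker = ⊥) :
    ∃ t ∈ 𝓝 x, ∃ K, AntilipschitzWith K (t.domRestrict f) := by
  obtain ⟨K, hK, hf'K⟩ := LinearMap.exists_antilipschitzWith (f' : E →ₗ[ℝ] F) hf'
  obtain ⟨c, hc, hcK⟩ := exists_between (inv_pos.2 hK)
  obtain ⟨t, ht, happrox⟩ := hf.approximates_deriv_on_nhds (Or.inr hc)
  have hanti := (hf'K.domRestrict t).add_lipschitzWith happrox.lipschitz_sub hcK
  simp only [Set.domRestrict, ContinuousLinearMap.coe_coe, add_sub_cancel] at hanti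
  exact ⟨t, ht, _, hanti⟩

theorem exists_continuousLinearMap_ker_prod_eq_bot (f : E →L[ℝ] F) :
    ∃ P : E →L[ℝ] f.ker, (P.prod f).ker = ⊥ := by
  obtain ⟨P, hP⟩ := Submodule.ClosedComplemented.of_finiteDimensional (𝕜 := ℝ) f.ker
  refine ⟨P, LinearMap.ker_eq_bot'.2 fun x hx => ?_⟩
  obtain ⟨hPx, hfx⟩ := Prod.ext_iff.1 hx
  exact (congrArg Subtype.val (hP ⟨x, hfx⟩)).symm.trans (congrArg Subtype.val hPx)

theorem exists_mem_nhds_dimH_inter_preimage_le_finrank_ker {f : E → F} {f' : E →L[ℝ] F} {x : E}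
    (hf : HasStrictFDerivAt f f' x) (y : F) :
    ∃ t ∈ 𝓝 x, dimH (t ∩ f ⁻¹' {y}) ≤ finrank ℝ f'.ker := by
  obtain ⟨P, hP⟩ := exists_continuousLinearMap_ker_prod_eq_bot f'
  obtain ⟨t, ht, K, hK⟩ := exists_mem_nhds_antilipschitzWith_domRestrict
    (P.hasStrictFDerivAt.prodMk hf) hP
  refine ⟨t, ht, ?_⟩
  calc dimH (t ∩ f ⁻¹' {y}) = dimH (Subtype.val '' ((↑) ⁻¹' (f ⁻¹' {y}) : Set t)) := by
        rw [Subtype.image_preimage_coe]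
    _ = dimH ((↑) ⁻¹' (f ⁻¹' {y}) : Set t) := isometry_subtype_coe.dimH_image _
    _ ≤ dimH (t.domRestrict (fun z => (P z, f z)) '' ((↑) ⁻¹' (f ⁻¹' {y}))) := hK.le_dimH_image _
    _ ≤ dimH (range fun z : f'.ker => (z, y)) := by
        refine dimH_mono ?_
        rintro _ ⟨z, rfl : f z = y, rfl⟩
        exact mem_range_self _
    _ ≤ dimH (univ : Set f'.ker) := (LipschitzWith.prodMk_right y).dimH_range_le
    _ = finrank ℝ f'.ker := Real.dimH_univ_eq_finrank _

theorem dimH_le_of_forall_exists_mem_nhdsWithin {X : Type*} [EMetricSpace X]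
    [SecondCountableTopology X] {s : Set X} {d : ℝ≥0∞} (h : ∀ x ∈ s, ∃ t ∈ 𝓝[s] x, dimH t ≤ d) :
    dimH s ≤ d := by
  by_contra! hlt
  obtain ⟨x, hx, hx_lt⟩ := exists_mem_nhdsWithin_lt_dimH_of_lt_dimH hlt
  obtain ⟨t, ht, htd⟩ := h x hx
  exact (hx_lt t ht).not_ge htd

end HausdorffDimension

section Separation

theorem inter_frontier_nonempty_of_isPreconnected {X : Type*} [TopologicalSpace X] {s t : Set X}
    (hs : IsPreconnected s) (hint : (s ∩ interior t).Nonempty) (hcl : (s \ closure t).Nonempty) :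
    (s ∩ frontier t).Nonempty := by
  rw [← not_disjoint_iff_nonempty_inter]
  intro hdisj
  obtain ⟨x, hxs, hxt⟩ := hcl
  have hsub : s ⊆ interior t ∪ (closure t)ᶜ := fun y hy =>
    or_iff_not_imp_right.2 fun hyt => by_contra fun hyt' =>
      disjoint_left.1 hdisj hy ⟨not_not.1 hyt, hyt'⟩
  refine hxt (interior_subset_closure
    (hs.subset_left_of_subset_union isOpen_interior isClosed_closure.isOpen_compl ?_ hsub hint hxs))
  exact disjoint_compl_right_iff_subset.2 interior_subset_closure

theorem finrank_le_dimH_inter_frontier_add_one {E : Type*} [NormedAddCommGroup E] [NormedSpace ℝ E]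
    [FiniteDimensional ℝ E] {B s : Set E} (hconv : Convex ℝ B) (hopen : IsOpen B)
    (hint : (B ∩ interior s).Nonempty) (hcl : (B \ closure s).Nonempty) :
    finrank ℝ E ≤ dimH (B ∩ frontier s) + 1 := by
  by_contra! hlt
  obtain ⟨a, ha⟩ := hint
  obtain ⟨b, hb⟩ := hcl
  set L : Submodule ℝ E := ℝ ∙ (b - a)
  have : IsClosed (L : Set E) := L.closed_of_finiteDimensional
  have hrank : finrank ℝ E ≤ finrank ℝ (E ⧸ L) + 1 := by
    rw [← L.finrank_quotient_add_finrank]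
    gcongr
    simpa using finrank_span_le_card {b - a}
  have hlip : LipschitzWith 1 L.mkQ := LipschitzWith.mk_one fun x y => by
    rw [dist_eq_norm, dist_eq_norm, ← map_sub]
    exact Submodule.Quotient.norm_mk_le L (x - y)
  have hdense : Dense (L.mkQ '' (B ∩ frontier s))ᶜ := by
    refine dense_compl_of_dimH_lt_finrank ((hlip.dimH_image_le _).trans_lt ?_)
    refine lt_of_add_lt_add_right (hlt.trans_le ?_)
    exact_mod_cast hrank
  let W : Set E := (B ∩ interior s) ∩ (· + (b - a)) ⁻¹' (B \ closure s)
  have hW : IsOpen W := (hopen.inter isOpen_interior).inter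
    ((hopen.sdiff isClosed_closure).preimage (by fun_prop))
  have haW : a ∈ W := ⟨ha, by simpa using hb⟩
  obtain ⟨_, ⟨a', ha', rfl⟩, hproj⟩ :=
    (hdense.exists_mem_open (L.isOpenMap_mkQ W hW) ⟨_, mem_image_of_mem _ haW⟩).imp
      fun _ => And.symm
  obtain ⟨y, hy, hys⟩ := inter_frontier_nonempty_of_isPreconnected
    (convex_segment (𝕜 := ℝ) a' (a' + (b - a))).isPreconnected
    ⟨a', left_mem_segment _ _ _, ha'.1.2⟩ ⟨_, right_mem_segment _ _ _, ha'.2.2⟩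
  refine hproj ⟨y, ⟨hconv.segment_subset ha'.1.1 ha'.2.1 hy, hys⟩, ?_⟩
  rw [segment_eq_image'] at hy
  obtain ⟨t, -, rfl⟩ := hy
  have hba : L.mkQ (b - a) = 0 :=
    (Submodule.Quotient.mk_eq_zero L).2 (Submodule.mem_span_singleton_self _)
  rw [add_sub_cancel_left, map_add, map_smul, hba, smul_zero, add_zero]

theorem finrank_le_dimH_inter_frontier_interior_closure_add_one {E : Type*}
    [NormedAddCommGroup E] [NormedSpace ℝ E] [FiniteDimensional ℝ E] {B s : Set E}
    (hconv : Convex ℝ B) (hopen : IsOpen B)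
    (hne : (B ∩ frontier (interior (closure s))).Nonempty) :
    finrank ℝ E ≤ dimH (B ∩ frontier (interior (closure s))) + 1 := by
  obtain ⟨x, hxB, hx⟩ := hne
  refine finrank_le_dimH_inter_frontier_add_one hconv hopen ?_ (sdiff_nonempty.2 fun hB => hx.2 ?_)
  · rw [interior_interior]
    exact mem_closure_iff.1 hx.1 B hopen hxB
  · rw [interior_interior, ← interior_closure_idem]
    exact interior_maximal hB hopen hxB

theorem disjoint_frontier_interior_closure_iUnion_connectedComponentIn {X : Type*} {ι : Sort*}
    [TopologicalSpace X] [LocallyConnectedSpace X] {O : Set X} (hO : IsOpen O) (p : ι → X) :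
    Disjoint (frontier (interior (closure (⋃ i, connectedComponentIn O (p i))))) O := by
  refine disjoint_left.2 fun y hy hyO => ?_
  have hy_closure : y ∈ closure (⋃ i, connectedComponentIn O (p i)) :=
    frontier_subset_closure (frontier_closure_subset (frontier_interior_subset hy))
  obtain ⟨z, hzy, hz⟩ := mem_closure_iff.1 hy_closure _ hO.connectedComponentIn
    (mem_connectedComponentIn hyO)
  obtain ⟨i, hzi⟩ := mem_iUnion.1 hz
  have hcomp : connectedComponentIn O y = connectedComponentIn O (p i) :=
    (connectedComponentIn_eq hzy).trans (connectedComponentIn_eq hzi).symm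
  have hsub : connectedComponentIn O y ⊆ interior (closure (⋃ i, connectedComponentIn O (p i))) :=
    hO.connectedComponentIn.subset_interior_iff.2 <| hcomp.subset.trans <|
      (subset_iUnion (fun i => connectedComponentIn O (p i)) i).trans subset_closure
  rw [isOpen_interior.frontier_eq] at hy
  exact hy.2 (hsub (mem_connectedComponentIn hyO))

end Separation

section Derivatives

variable {𝕜 E F F' : Type*} [NontriviallyNormedField 𝕜] [NormedAddCommGroup E] [NormedSpace 𝕜 E]
  [NormedAddCommGroup F] [NormedSpace 𝕜 F] [NormedAddCommGroup F'] [NormedSpace 𝕜 F']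

theorem eventuallyEq_zero_of_iteratedFDeriv_eq_zero [CharZero 𝕜] [CompleteSpace F] {f : E → F}
    {x : E} (hf : AnalyticAt 𝕜 f x) (h : ∀ n, iteratedFDeriv 𝕜 n f x = 0) : f =ᶠ[𝓝 x] 0 := by
  obtain ⟨q, r, hq⟩ := hf
  filter_upwards [Metric.eball_mem_nhds x hq.r_pos] with y hy
  have hterm : ∀ n, (q n fun _ => y - x) = 0 := fun n => by
    have := hq.factorial_smul (y - x) n
    rw [h n, ← Nat.cast_smul_eq_nsmul 𝕜] at this
    simpa [Nat.factorial_ne_zero] using this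
  have hsum := hq.hasSum_sub hy
  simp only [hterm] at hsum
  exact hsum.unique hasSum_zero

theorem fderiv_iteratedFDeriv_eq_zero_iff {f : E → F} {x : E} {n : ℕ} :
    fderiv 𝕜 (iteratedFDeriv 𝕜 n f) x = 0 ↔ iteratedFDeriv 𝕜 (n + 1) f x = 0 := by
  rw [fderiv_iteratedFDeriv]
  exact (continuousMultilinearCurryLeftEquiv 𝕜 (fun _ : Fin (n + 1) => E) F).map_eq_zero_iff

theorem fderiv_continuousLinearEquiv_comp_eq_zero (l : F ≃L[𝕜] F') {f : E → F} {x : E}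
    (h : fderiv 𝕜 f x = 0) : fderiv 𝕜 (l ∘ f) x = 0 := by
  rw [l.comp_fderiv, h, ContinuousLinearMap.comp_zero]

theorem iteratedFDeriv_add_two_eq_zero {f : E → F} {x : E} {n : ℕ}
    (h : fderiv 𝕜 (fderiv 𝕜 (iteratedFDeriv 𝕜 n f)) x = 0) : iteratedFDeriv 𝕜 (n + 2) f x = 0 := by
  rw [← fderiv_iteratedFDeriv_eq_zero_iff, iteratedFDeriv_succ_eq_comp_left]
  exact fderiv_continuousLinearEquiv_comp_eq_zero (𝕜 := 𝕜) (E := E) (F := E →L[𝕜] E [×n]→L[𝕜] F)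
    (F' := E [×(n + 1)]→L[𝕜] F) (x := x)
    (continuousMultilinearCurryLeftEquiv 𝕜 (fun _ => E) F).symm.toContinuousLinearEquiv h

end Derivatives

section SingularZeros

variable {E F : Type*} [NormedAddCommGroup E] [NormedSpace ℝ E] [NormedAddCommGroup F]
  [NormedSpace ℝ F]

/-- The zeros at which the first derivative vanishes as well: the zeros of order at least two. -/
def singularZeros (u : E → F) : Set E := {x | u x = 0 ∧ fderiv ℝ u x = 0}

/-- The zeros of order exactly two; applied to the iterated derivatives of a function, these are the
strata of its singular zeros. -/
def zerosOfOrderTwo (u : E → F) : Set E :=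
  {x | u x = 0 ∧ fderiv ℝ u x = 0 ∧ fderiv ℝ (fderiv ℝ u) x ≠ 0}

theorem mem_iUnion_zerosOfOrderTwo_iteratedFDeriv [CompleteSpace F] {u : E → F} {G : Set E}
    (hu : AnalyticOnNhd ℝ u G) (hG : IsPreconnected G) (hne : ∃ x ∈ G, u x ≠ 0) {x : E}
    (hx : x ∈ G) (hxu : x ∈ singularZeros u) :
    x ∈ ⋃ n, zerosOfOrderTwo (iteratedFDeriv ℝ n u) := by
  have hex : ∃ n, iteratedFDeriv ℝ n u x ≠ 0 := by
    by_contra! h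
    obtain ⟨y, hy, hyu⟩ := hne
    exact hyu (hu.eqOn_zero_of_preconnected_of_eventuallyEq_zero hG hx
      (eventuallyEq_zero_of_iteratedFDeriv_eq_zero (hu x hx) h) hy)
  classical
  obtain ⟨m, hm, hmin⟩ : ∃ m, iteratedFDeriv ℝ m u x ≠ 0 ∧ ∀ j < m, iteratedFDeriv ℝ j u x = 0 :=
    ⟨Nat.find hex, Nat.find_spec hex, fun j hj => not_not.1 (Nat.find_min hex hj)⟩
  match m with
  | 0 => exact absurd (by ext; simpa using hxu.1) hm
  | 1 => exact absurd (by ext w; simp [hxu.2]) hm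
  | n + 2 =>
    exact mem_iUnion.2 ⟨n, hmin n (by lia),
      fderiv_iteratedFDeriv_eq_zero_iff.2 (hmin (n + 1) (by lia)),
      fun h => hm (iteratedFDeriv_add_two_eq_zero h)⟩

end SingularZeros

section Laplacian

variable {E F : Type*} [NormedAddCommGroup E] [InnerProductSpace ℝ E] [FiniteDimensional ℝ E]
  [NormedAddCommGroup F] [NormedSpace ℝ F]

theorem laplacian_eq_sum_fderiv_fderiv {ι : Type*} [Fintype ι] (b : OrthonormalBasis ι ℝ E)
    (f : E → F) (x : E) : Δ f x = ∑ i, fderiv ℝ (fderiv ℝ f) x (b i) (b i) := by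
  simp [laplacian_eq_iteratedFDeriv_orthonormalBasis f b, iteratedFDeriv_two_apply]

theorem laplacian_fderiv {f : E → F} {x : E} (hf : ContDiffAt ℝ 3 f x) :
    Δ (fderiv ℝ f) x = fderiv ℝ (Δ f) x := by
  have hf' : ContDiffAt ℝ 2 (fderiv ℝ f) x := hf.fderiv_right (by norm_num)
  set T := fderiv ℝ (fderiv ℝ (fderiv ℝ f)) x
  have happly : ∀ v w : E,
      HasFDerivAt (fun y => fderiv ℝ (fderiv ℝ f) y v w) ((T.flip v).flip w) x := fun v w => by
    have hT : HasFDerivAt (fderiv ℝ (fderiv ℝ f)) T x :=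
      ((hf'.fderiv_right (m := 1) (by norm_num)).differentiableAt one_ne_zero).hasFDerivAt
    simpa using (hT.clm_apply (hasFDerivAt_const v x)).clm_apply (hasFDerivAt_const w x)
  have hsymm : ∀ v w, T v w = T w v := hf'.isSymmSndFDerivAt (by simp)
  have hsymm_apply : ∀ u v w, T u v w = T u w v := fun u v w => by
    have hev : (fun y => fderiv ℝ (fderiv ℝ f) y v w) =ᶠ[𝓝 x]
        fun y => fderiv ℝ (fderiv ℝ f) y w v := by
      filter_upwards [hf.eventually (by simp)] with y hy
      exact (hy.of_le (by norm_num : (2 : ℕ∞ω) ≤ 3)).isSymmSndFDerivAt (by simp) v w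
    exact DFunLike.congr_fun (((happly v w).congr_of_eventuallyEq hev.symm).unique (happly w v)) u
  have hlap : Δ f = fun y => ∑ i, fderiv ℝ (fderiv ℝ f) y (stdOrthonormalBasis ℝ E i)
      (stdOrthonormalBasis ℝ E i) := funext fun y => laplacian_eq_sum_fderiv_fderiv _ f y
  ext w
  rw [laplacian_eq_sum_fderiv_fderiv (stdOrthonormalBasis ℝ E), hlap,
    (HasFDerivAt.fun_sum fun i _ => happly _ _).fderiv, sum_apply, sum_apply]
  refine Finset.sum_congr rfl fun i _ => ?_
  rw [hsymm_apply, hsymm]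
  rfl

theorem finrank_ker_fderiv_fderiv_add_two_le {u : E → F} {x : E} (hu : ContDiffAt ℝ 2 u x)
    (hlap : Δ u x = 0) (hne : fderiv ℝ (fderiv ℝ u) x ≠ 0) :
    finrank ℝ (fderiv ℝ (fderiv ℝ u) x).ker + 2 ≤ finrank ℝ E := by
  set b := stdOrthonormalBasis ℝ E
  set B := (fderiv ℝ (fderiv ℝ u) x).toLinearMap₁₂ with hB_def
  have hsymm : ∀ v w, B v w = B w v := hu.isSymmSndFDerivAt (by simp)
  have hB : B ≠ 0 := fun h => hne (by ext v w; exact LinearMap.congr_fun₂ h v w)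
  have htrace : ∑ i, B (b.toBasis i) (b.toBasis i) = 0 := by
    simpa [hB_def, laplacian_eq_sum_fderiv_fderiv b] using hlap
  have hker : (fderiv ℝ (fderiv ℝ u) x).ker = B.ker := by
    ext v
    simp [hB_def, LinearMap.ext_iff, ContinuousLinearMap.ext_iff]
  rw [hker]
  exact finrank_ker_add_two_le_of_sum_apply_self_eq_zero b.toBasis hsymm hB htrace

theorem exists_mem_nhds_dimH_inter_fderiv_preimage_add_two_le {u : E → F} {x : E}
    (hu : ContDiffAt ℝ 2 u x) (hlap : Δ u x = 0) (hne : fderiv ℝ (fderiv ℝ u) x ≠ 0)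
    (y : E →L[ℝ] F) : ∃ t ∈ 𝓝 x, dimH (t ∩ fderiv ℝ u ⁻¹' {y}) + 2 ≤ finrank ℝ E := by
  have hstrict : HasStrictFDerivAt (fderiv ℝ u) (fderiv ℝ (fderiv ℝ u) x) x :=
    (hu.fderiv_right (m := 1) (by norm_num)).hasStrictFDerivAt one_ne_zero
  obtain ⟨t, ht, htdim⟩ := exists_mem_nhds_dimH_inter_preimage_le_finrank_ker hstrict y
  refine ⟨t, ht, (add_le_add_left htdim 2).trans ?_⟩
  exact_mod_cast finrank_ker_fderiv_fderiv_add_two_le hu hlap hne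

end Laplacian

section Helmholtz

variable {E F : Type*} [NormedAddCommGroup E] [InnerProductSpace ℝ E] [FiniteDimensional ℝ E]
  [NormedAddCommGroup F] [NormedSpace ℝ F]

/-- `u` is a solution of the Helmholtz equation `Δ u + c u = 0` on `G`. Solutions are taken to be
real analytic, so that they can be differentiated any number of times. -/
structure IsHelmholtzOn (c : ℝ) (u : E → F) (G : Set E) : Prop where
  analyticOnNhd : AnalyticOnNhd ℝ u G
  laplacian_add_smul : ∀ x ∈ G, Δ u x + c • u x = 0

namespace IsHelmholtzOn

variable {c : ℝ} {u : E → F} {G : Set E}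

theorem continuousLinearEquiv_comp {F' : Type*} [NormedAddCommGroup F'] [NormedSpace ℝ F']
    (hu : IsHelmholtzOn c u G) (l : F ≃L[ℝ] F') : IsHelmholtzOn c (l ∘ u) G where
  analyticOnNhd := fun x hx => (l.toContinuousLinearMap.analyticAt _).comp (hu.analyticOnNhd x hx)
  laplacian_add_smul := fun x hx => by
    rw [laplacian_CLE_comp_left, Function.comp_apply, Function.comp_apply, ← map_smul, ← map_add,
      hu.laplacian_add_smul x hx, map_zero]

protected theorem fderiv [CompleteSpace F] (hu : IsHelmholtzOn c u G) (hG : IsOpen G) :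
    IsHelmholtzOn c (fderiv ℝ u) G where
  analyticOnNhd := hu.analyticOnNhd.fderiv
  laplacian_add_smul := fun x hx => by
    have hlap : Δ u =ᶠ[𝓝 x] (-c) • u := by
      filter_upwards [hG.mem_nhds hx] with y hy
      rw [Pi.smul_apply, neg_smul]
      exact eq_neg_of_add_eq_zero_left (hu.laplacian_add_smul y hy)
    rw [laplacian_fderiv (hu.analyticOnNhd x hx).contDiffAt, hlap.fderiv_eq,
      fderiv_const_smul (hu.analyticOnNhd x hx).differentiableAt, neg_smul, neg_add_cancel]

protected theorem iteratedFDeriv [CompleteSpace F] (hu : IsHelmholtzOn c u G) (hG : IsOpen G)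
    (n : ℕ) : IsHelmholtzOn c (iteratedFDeriv ℝ n u) G := by
  induction n with
  | zero =>
    exact hu.continuousLinearEquiv_comp
      (continuousMultilinearCurryFin0 ℝ E F).symm.toContinuousLinearEquiv
  | succ n ih =>
    exact (ih.fderiv hG).continuousLinearEquiv_comp
      (continuousMultilinearCurryLeftEquiv ℝ (fun _ => E) F).symm.toContinuousLinearEquiv

theorem exists_mem_nhdsWithin_dimH_add_two_le [CompleteSpace F] (hu : IsHelmholtzOn c u G) {x : E}
    (hx : x ∈ G) (hxu : x ∈ zerosOfOrderTwo u) :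
    ∃ t ∈ 𝓝[G ∩ zerosOfOrderTwo u] x, dimH t + 2 ≤ finrank ℝ E := by
  have hlap : Δ u x = 0 := by
    simpa only [hxu.1, smul_zero, add_zero] using hu.laplacian_add_smul x hx
  obtain ⟨t, ht, htdim⟩ := exists_mem_nhds_dimH_inter_fderiv_preimage_add_two_le
    (hu.analyticOnNhd x hx).contDiffAt hlap hxu.2.2 0
  refine ⟨t ∩ fderiv ℝ u ⁻¹' {0}, Filter.inter_mem (mem_nhdsWithin_of_mem_nhds ht) ?_, htdim⟩
  exact Filter.mem_of_superset self_mem_nhdsWithin fun y hy => hy.2.2.1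

theorem dimH_inter_singularZeros_add_two_le [CompleteSpace F] (hu : IsHelmholtzOn c u G)
    (hG : IsOpen G) (hGconn : IsPreconnected G) (hne : ∃ x ∈ G, u x ≠ 0)
    (hsing : (G ∩ singularZeros u).Nonempty) :
    dimH (G ∩ singularZeros u) + 2 ≤ finrank ℝ E := by
  let S : ℕ → Set E := fun n => G ∩ zerosOfOrderTwo (iteratedFDeriv ℝ n u)
  have hcover : G ∩ singularZeros u ⊆ ⋃ n, S n := by
    rw [← inter_iUnion]
    exact fun x hx => ⟨hx.1,
      mem_iUnion_zerosOfOrderTwo_iteratedFDeriv hu.analyticOnNhd hGconn hne hx.1 hx.2⟩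
  have hlocal : ∀ n, ∀ x ∈ S n, ∃ t ∈ 𝓝[S n] x, dimH t + 2 ≤ finrank ℝ E := fun n x hx =>
    (hu.iteratedFDeriv hG n).exists_mem_nhdsWithin_dimH_add_two_le hx.1 hx.2
  have htwo : (2 : ℝ≥0∞) ≤ finrank ℝ E := by
    obtain ⟨x, hx⟩ := hsing
    obtain ⟨n, hn⟩ := mem_iUnion.1 (hcover hx)
    obtain ⟨t, -, ht⟩ := hlocal n x hn
    exact le_add_self.trans ht
  have hdim : ∀ n, dimH (S n) ≤ finrank ℝ E - 2 := fun n =>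
    dimH_le_of_forall_exists_mem_nhdsWithin fun x hx => by
      obtain ⟨t, ht, htdim⟩ := hlocal n x hx
      exact ⟨t, ht, ENNReal.le_sub_of_add_le_right (by simp) htdim⟩
  calc dimH (G ∩ singularZeros u) + 2
      ≤ dimH (⋃ n, S n) + 2 := by gcongr
    _ ≤ finrank ℝ E - 2 + 2 := by
        rw [dimH_iUnion]
        gcongr
        exact iSup_le hdim
    _ = finrank ℝ E := tsub_add_cancel_of_le htwo

end IsHelmholtzOn

theorem stmt1_general {ι : Sort*} [CompleteSpace F] {G : Set E} (hG : IsOpen G)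
    (hGconn : IsPreconnected G) {c : ℝ} {v : E → F} (hv : IsHelmholtzOn c v G)
    (hvne : ∃ x ∈ G, v x ≠ 0) (p : ι → E) {A : Set E}
    (hA : A = interior (closure (⋃ i, connectedComponentIn {x ∈ G | v x ≠ 0} (p i))))
    {x : E} (hx : x ∈ frontier A) {r : ℝ} (hr : 0 < r) (hball : ball x r ⊆ G) :
    ∃ y ∈ ball x r ∩ frontier A, fderiv ℝ v y ≠ 0 := by
  by_contra! hgrad
  have hnonempty : (ball x r ∩ frontier A).Nonempty := ⟨x, mem_ball_self hr, hx⟩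
  have hopen : IsOpen {x ∈ G | v x ≠ 0} :=
    hv.analyticOnNhd.continuousOn.isOpen_inter_preimage hG isOpen_compl_singleton
  have hdisj : Disjoint (frontier A) {x ∈ G | v x ≠ 0} :=
    hA ▸ disjoint_frontier_interior_closure_iUnion_connectedComponentIn hopen p
  have hsub : ball x r ∩ frontier A ⊆ G ∩ singularZeros v := fun y hy =>
    ⟨hball hy.1, by_contra fun hvy => disjoint_left.1 hdisj hy.2 ⟨hball hy.1, hvy⟩, hgrad y hy⟩
  have hlower : finrank ℝ E ≤ dimH (ball x r ∩ frontier A) + 1 := by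
    subst hA
    exact finrank_le_dimH_inter_frontier_interior_closure_add_one (convex_ball x r) isOpen_ball
      hnonempty
  have hupper : dimH (ball x r ∩ frontier A) + 2 ≤ finrank ℝ E :=
    (add_le_add_left (dimH_mono hsub) 2).trans
      (hv.dimH_inter_singularZeros_add_two_le hG hGconn hvne (hnonempty.mono hsub))
  have hle : (2 : ℝ≥0∞) ≤ 1 :=
    ENNReal.le_of_add_le_add_left (Real.dimH_ne_top _) (hupper.trans hlower)
  norm_num at hle

end Helmholtz

theorem lap_eq_laplacian {N : ℕ} (v : EuclideanSpace ℝ (Fin N) → ℝ) : lap v = Δ v := by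
  rw [laplacian_eq_iteratedFDeriv_orthonormalBasis v (EuclideanSpace.basisFun (Fin N) ℝ)]
  simp only [EuclideanSpace.basisFun_apply]
  rfl

theorem gradient_eq_zero_iff {𝕜 E : Type*} [RCLike 𝕜] [NormedAddCommGroup E]
    [InnerProductSpace 𝕜 E] [CompleteSpace E] {f : E → 𝕜} {x : E} :
    gradient f x = 0 ↔ fderiv 𝕜 f x = 0 :=
  (toDual 𝕜 E).symm.map_eq_zero_iff

/-- near any point of `∂A ∩ G` (where `A` is the interior of the
closure of finitely many nodal domains) there is a point of `∂A` where the
gradient of `v` does not vanish. -/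
theorem stmt1 {N : ℕ} (G : Set (EuclideanSpace ℝ (Fin N)))
    (hGopen : IsOpen G) (hGconn : IsConnected G)
    (k : ℝ) (hk : 0 < k) (v : EuclideanSpace ℝ (Fin N) → ℝ)
    (hva : AnalyticOnNhd ℝ v G)
    (hHelm : ∀ x ∈ G, lap v x + k ^ 2 * v x = 0)
    (hvnt : ¬ ∀ x ∈ G, v x = 0)
    (n : ℕ) (A : Fin n → Set (EuclideanSpace ℝ (Fin N)))
    (hA : ∀ i, ∃ p, p ∈ G ∧ v p ≠ 0 ∧
      A i = connectedComponentIn {x ∈ G | v x ≠ 0} p)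
    (Aint : Set (EuclideanSpace ℝ (Fin N)))
    (hAint : Aint = interior (closure (⋃ i, A i))) :
    ∀ x ∈ frontier Aint ∩ G, ∀ r > 0, ball x r ⊆ G →
      ∃ y, y ∈ ball x r ∩ frontier Aint ∧ gradient v y ≠ 0 := by
  intro x hx r hr hball
  choose p _ _ hp using hA
  obtain rfl : A = fun i => connectedComponentIn {x ∈ G | v x ≠ 0} (p i) := funext hp
  have hv : IsHelmholtzOn (k ^ 2) v G := ⟨hva, lap_eq_laplacian v ▸ hHelm⟩
  push Not at hvnt
  simpa only [ne_eq, gradient_eq_zero_iff] using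
    stmt1_general hGopen hGconn.isPreconnected hv hvnt p hAint hx.1 hr hball
end

section
/- Let A, B be disjoint connected open subsets of ℝ^N and Σ an open connected subset of a smooth hypersurface with Σ ⊆ ∂A ∩ ∂B, such that near each point of Σ the complement of Σ locally consists of exactly the two sides lying in A and B. Given points a ∈ A and b ∈ B, there exists a C¹ regular curve from a to b contained in A ∪ Σ ∪ B that crosses Σ exactly once and orthogonally. -/
open Metric Set

open Filter Topology

/-!
Fix `z ∈ S` and cross `S` at `z` by a short segment in the direction of `n = ∇ f z`. Since `f` is
strictly differentiable at `z` with nonzero derivative, moving along `n` increases `f` at a definite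
rate near `z`. Hence every nearby point with `f > 0` can be pushed along `n` into a fixed small ball
without leaving `{f > 0}`, so `{f > 0}` is locally connected at `z` and, close to `z`, lies in only
one of `A` and `B`. The same holds for `{f < 0}`, and the two sides lie in different sets because
`z` is in the closure of both.

The endpoints of the segment are then joined to `a` and `b` inside `A` and `B`. In dimension at
least two, a connected open set contains regular arcs between any two of its points with arbitrary
nonzero end velocities: polygonal arcs exist, and velocities are changed by inserting small loops.
On a line `A` and `B` are intervals, and the segment itself can be prolonged to `a` and `b`.
-/

section RegularCurves

variable {E : Type*} [NormedAddCommGroup E] [NormedSpace ℝ E]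

theorem exists_contDiff_one_glue {γ₁ γ₂ : ℝ → E} {T : ℝ} (h₁ : ContDiff ℝ 1 γ₁)
    (h₂ : ContDiff ℝ 1 γ₂) (h : γ₁ T = γ₂ T) (h' : deriv γ₁ T = deriv γ₂ T) :
    ∃ γ : ℝ → E, ContDiff ℝ 1 γ ∧ EqOn γ γ₁ (Iic T) ∧ EqOn γ γ₂ (Ici T) ∧
      EqOn (deriv γ) (deriv γ₁) (Iic T) ∧ EqOn (deriv γ) (deriv γ₂) (Ici T) := by
  have eqOn_Iic (g₁ g₂ : ℝ → E) : EqOn (fun t ↦ if t ≤ T then g₁ t else g₂ t) g₁ (Iic T) :=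
    fun _ ht ↦ if_pos ht
  have eqOn_Ici {g₁ g₂ : ℝ → E} (hg : g₁ T = g₂ T) :
      EqOn (fun t ↦ if t ≤ T then g₁ t else g₂ t) g₂ (Ici T) := by
    intro t ht
    rcases (mem_Ici.1 ht).eq_or_lt with rfl | ht
    · simpa using hg
    · exact if_neg ht.not_ge
  let γ : ℝ → E := fun t ↦ if t ≤ T then γ₁ t else γ₂ t
  let γ' : ℝ → E := fun t ↦ if t ≤ T then deriv γ₁ t else deriv γ₂ t
  have hasDerivWithinAt_Iic (t : ℝ) (ht : t ≤ T) : HasDerivWithinAt γ (γ' t) (Iic T) t := by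
    rw [show γ' t = deriv γ₁ t from eqOn_Iic _ _ ht]
    exact (h₁.differentiable one_ne_zero t).hasDerivAt.hasDerivWithinAt.congr
      (eqOn_Iic γ₁ γ₂) (eqOn_Iic γ₁ γ₂ ht)
  have hasDerivWithinAt_Ici (t : ℝ) (ht : T ≤ t) : HasDerivWithinAt γ (γ' t) (Ici T) t := by
    rw [show γ' t = deriv γ₂ t from eqOn_Ici h' ht]
    exact (h₂.differentiable one_ne_zero t).hasDerivAt.hasDerivWithinAt.congr
      (eqOn_Ici h) (eqOn_Ici h ht)
  have hasDerivAt (t : ℝ) : HasDerivAt γ (γ' t) t := by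
    rcases lt_trichotomy t T with ht | rfl | ht
    · exact (hasDerivWithinAt_Iic t ht.le).hasDerivAt (Iic_mem_nhds ht)
    · simpa [Iic_union_Ici] using
        (hasDerivWithinAt_Iic t le_rfl).union (hasDerivWithinAt_Ici t le_rfl)
    · exact (hasDerivWithinAt_Ici t ht.le).hasDerivAt (Ici_mem_nhds ht)
  have deriv_eq : deriv γ = γ' := funext fun t ↦ (hasDerivAt t).deriv
  have continuous_γ' : Continuous γ' :=
    (h₁.continuous_deriv le_rfl).if_le (h₂.continuous_deriv le_rfl) continuous_id
      continuous_const fun t (ht : t = T) ↦ ht ▸ h'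
  refine ⟨γ, ?_, eqOn_Iic _ _, eqOn_Ici h, deriv_eq ▸ eqOn_Iic _ _, deriv_eq ▸ eqOn_Ici h'⟩
  exact contDiff_one_iff_deriv.2 ⟨fun t ↦ (hasDerivAt t).differentiableAt, deriv_eq ▸ continuous_γ'⟩

/-- The restriction of `γ` to `[0, T]` is a regular `C¹` curve which leaves `p` with velocity `u`
and arrives at `q` with velocity `v`. So that derivatives at the endpoints are two-sided, `γ` is
required to be `C¹` on the whole line; it may be singular outside `[0, T]`. -/
structure IsRegularArc (γ : ℝ → E) (T : ℝ) (p u q v : E) : Prop where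
  pos : 0 < T
  contDiff : ContDiff ℝ 1 γ
  source : γ 0 = p
  deriv_source : deriv γ 0 = u
  target : γ T = q
  deriv_target : deriv γ T = v
  deriv_ne_zero : ∀ t ∈ Icc 0 T, deriv γ t ≠ 0

namespace IsRegularArc

variable {γ γ₁ γ₂ : ℝ → E} {T T₁ T₂ : ℝ} {p q r u v w : E}

theorem hasDerivAt (h : IsRegularArc γ T p u q v) (t : ℝ) : HasDerivAt γ (deriv γ t) t :=
  (h.contDiff.differentiable one_ne_zero t).hasDerivAt

theorem reverse (h : IsRegularArc γ T p u q v) :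
    IsRegularArc (fun t ↦ γ (T - t)) T q (-v) p (-u) where
  pos := h.pos
  contDiff := h.contDiff.comp (contDiff_const.sub contDiff_id)
  source := by simpa using h.target
  deriv_source := by simp [deriv_comp_const_sub, h.deriv_target]
  target := by simpa using h.source
  deriv_target := by simp [deriv_comp_const_sub, h.deriv_source]
  deriv_ne_zero t ht := by
    rw [deriv_comp_const_sub]
    exact neg_ne_zero.2 (h.deriv_ne_zero _ ⟨sub_nonneg.2 ht.2, sub_le_self _ ht.1⟩)

theorem comp_mul_left (h : IsRegularArc γ T p u q v) {c : ℝ} (hc : 0 < c) :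
    IsRegularArc (fun t ↦ γ (c * t)) (T / c) p (c • u) q (c • v) where
  pos := div_pos h.pos hc
  contDiff := h.contDiff.comp (contDiff_const.mul contDiff_id)
  source := by simpa using h.source
  deriv_source := by simp [deriv_comp_mul_left, h.deriv_source]
  target := by simpa [mul_div_cancel₀ _ hc.ne'] using h.target
  deriv_target := by simp [deriv_comp_mul_left, mul_div_cancel₀ _ hc.ne', h.deriv_target]
  deriv_ne_zero t ht := by
    rw [deriv_comp_mul_left]
    exact smul_ne_zero hc.ne'
      (h.deriv_ne_zero _ ⟨mul_nonneg hc.le ht.1, (le_div_iff₀' hc).1 ht.2⟩)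

theorem homothety (h : IsRegularArc γ T p u q v) (o : E) {c : ℝ} (hc : c ≠ 0) :
    IsRegularArc (fun t ↦ AffineMap.homothety o c (γ t)) T
      (AffineMap.homothety o c p) (c • u) (AffineMap.homothety o c q) (c • v) := by
  have hasDerivAt (t : ℝ) :
      HasDerivAt (fun t ↦ AffineMap.homothety o c (γ t)) (c • deriv γ t) t := by
    simp only [AffineMap.homothety_apply, vsub_eq_sub, vadd_eq_add]
    exact (((h.hasDerivAt t).sub_const o).const_smul c).add_const o
  have contDiff : ContDiff ℝ 1 (fun t ↦ AffineMap.homothety o c (γ t)) := by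
    simpa only [AffineMap.homothety_apply, vsub_eq_sub, vadd_eq_add] using
      ((h.contDiff.sub contDiff_const).const_smul c).add contDiff_const
  refine ⟨h.pos, contDiff, by rw [h.source], ?_, by rw [h.target], ?_, fun t ht ↦ ?_⟩
  · rw [(hasDerivAt 0).deriv, h.deriv_source]
  · rw [(hasDerivAt T).deriv, h.deriv_target]
  · rw [(hasDerivAt t).deriv]
    exact smul_ne_zero hc (h.deriv_ne_zero t ht)

theorem exists_concat (h₁ : IsRegularArc γ₁ T₁ p u q v) (h₂ : IsRegularArc γ₂ T₂ q v r w) :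
    ∃ γ : ℝ → E, IsRegularArc γ (T₁ + T₂) p u r w ∧ deriv γ T₁ = v ∧
      (∀ t ≤ T₁, γ t = γ₁ t) ∧ ∀ t ≥ T₁, γ t = γ₂ (t - T₁) := by
  have hshift : ContDiff ℝ 1 fun t ↦ γ₂ (t - T₁) :=
    h₂.contDiff.comp (contDiff_id.sub contDiff_const)
  obtain ⟨γ, hγ, hl, hr, hl', hr'⟩ := exists_contDiff_one_glue (T := T₁) h₁.contDiff hshift
    (by simp [h₁.target, h₂.source])
    (by simp [deriv_comp_sub_const, h₁.deriv_target, h₂.deriv_source])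
  simp only [EqOn, deriv_comp_sub_const, mem_Iic, mem_Ici] at hl hr hl' hr'
  have h₁_pos := h₁.pos
  have h₂_pos := h₂.pos
  refine ⟨γ, ⟨by positivity, hγ, ?_, ?_, ?_, ?_, fun t ht ↦ ?_⟩, ?_, hl, hr⟩
  · rw [hl h₁.pos.le, h₁.source]
  · rw [hl' h₁.pos.le, h₁.deriv_source]
  · rw [hr (by linarith), add_sub_cancel_left, h₂.target]
  · rw [hr' (by linarith), add_sub_cancel_left, h₂.deriv_target]
  · rcases le_total t T₁ with htT | htT
    · rw [hl' htT]
      exact h₁.deriv_ne_zero t ⟨ht.1, htT⟩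
    · rw [hr' htT]
      exact h₂.deriv_ne_zero _ ⟨sub_nonneg.2 htT, by linarith [ht.2]⟩
  · rw [hl' le_rfl, h₁.deriv_target]

end IsRegularArc

/-- Some regular `C¹` arc leads from `p`, with initial velocity `u`, to `q`, with final velocity
`v`, and stays in `K` in between. The endpoints need not belong to `K`, so that arcs arriving at
the boundary of `K` are covered. -/
def RegularlyJoinedIn (K : Set E) (p u q v : E) : Prop :=
  ∃ γ T, IsRegularArc γ T p u q v ∧ MapsTo γ (Ioo 0 T) K

namespace RegularlyJoinedIn

variable {K : Set E} {p q r u v w : E}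

theorem symm (h : RegularlyJoinedIn K p u q v) : RegularlyJoinedIn K q (-v) p (-u) := by
  obtain ⟨γ, T, hγ, hK⟩ := h
  exact ⟨_, T, hγ.reverse, fun t ht ↦ hK ⟨sub_pos.2 ht.2, sub_lt_self _ ht.1⟩⟩

theorem trans (h₁ : RegularlyJoinedIn K p u q v) (h₂ : RegularlyJoinedIn K q v r w)
    (hq : q ∈ K) : RegularlyJoinedIn K p u r w := by
  obtain ⟨γ₁, T₁, hγ₁, hK₁⟩ := h₁
  obtain ⟨γ₂, T₂, hγ₂, hK₂⟩ := h₂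
  obtain ⟨γ, hγ, -, hl, hr⟩ := hγ₁.exists_concat hγ₂
  refine ⟨γ, _, hγ, fun t ht ↦ ?_⟩
  rcases lt_trichotomy t T₁ with htT | rfl | htT
  · rw [hl t htT.le]
    exact hK₁ ⟨ht.1, htT⟩
  · rwa [hl t le_rfl, hγ₁.target]
  · rw [hr t htT.le]
    exact hK₂ ⟨sub_pos.2 htT, sub_left_lt_of_lt_add ht.2⟩

theorem of_openSegment {T : ℝ} (hT : 0 < T) (hu : u ≠ 0) (hq : p + T • u = q)
    (h : openSegment ℝ p q ⊆ K) : RegularlyJoinedIn K p u q u := by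
  have hasDerivAt (t : ℝ) : HasDerivAt (fun t : ℝ ↦ p + t • u) u t := by
    simpa using ((hasDerivAt_id t).smul_const u).const_add p
  refine ⟨fun t ↦ p + t • u, T, ⟨hT, by fun_prop, by simp, (hasDerivAt 0).deriv, hq,
    (hasDerivAt T).deriv, fun t _ ↦ (hasDerivAt t).deriv.symm ▸ hu⟩, fun t ht ↦ h ?_⟩
  rw [openSegment_eq_image']
  refine ⟨t / T, ⟨div_pos ht.1 hT, (div_lt_one hT).2 ht.2⟩, ?_⟩
  simp [← hq, smul_smul, div_mul_cancel₀ _ hT.ne']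

theorem of_univ_of_isOpen (h : RegularlyJoinedIn univ p u p v) (hK : IsOpen K) (hp : p ∈ K) :
    RegularlyJoinedIn K p u p v := by
  obtain ⟨γ, T, hγ, -⟩ := h
  have eventually_mem : ∀ᶠ c : ℝ in 𝓝 0, ∀ t ∈ Icc 0 T, AffineMap.homothety p c (γ t) ∈ K := by
    refine isCompact_Icc.eventually_forall_of_forall_eventually fun t _ ↦ ?_
    have hcont : Continuous fun z : ℝ × ℝ ↦ AffineMap.homothety p z.1 (γ z.2) := by
      have := hγ.contDiff.continuous
      simp only [AffineMap.homothety_apply, vsub_eq_sub, vadd_eq_add]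
      fun_prop
    exact hcont.continuousAt.eventually_mem (hK.mem_nhds (by simpa using hp))
  obtain ⟨c, hc, hc₀⟩ :=
    ((eventually_mem.filter_mono nhdsWithin_le_nhds).and (self_mem_nhdsWithin (s := Ioi 0))).exists
  replace hc₀ : 0 < c := hc₀
  have harc := (hγ.homothety p hc₀.ne').comp_mul_left (inv_pos.2 hc₀)
  simp only [AffineMap.homothety_apply_same, inv_smul_smul₀ hc₀.ne'] at harc
  refine ⟨_, _, harc, fun t ht ↦ hc _ ⟨mul_nonneg (inv_nonneg.2 hc₀.le) ht.1.le, ?_⟩⟩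
  exact (le_div_iff₀' (inv_pos.2 hc₀)).1 ht.2.le

-- The cubic Hermite loop at `p` with end velocities `u` and `v`. The coefficients of `u` and `v` in
-- its derivative have no common zero.
theorem loop_of_linearIndependent (h : LinearIndependent ℝ ![u, v]) (p : E) :
    RegularlyJoinedIn univ p u p v := by
  let γ : ℝ → E := fun t ↦ p + ((t * (1 - t) ^ 2) • u + (t ^ 3 - t ^ 2) • v)
  have deriv_γ (t : ℝ) : deriv γ t = ((1 - t) * (1 - 3 * t)) • u + (t * (3 * t - 2)) • v := by
    have hu : HasDerivAt (fun t : ℝ ↦ t * (1 - t) ^ 2) ((1 - t) * (1 - 3 * t)) t :=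
      ((hasDerivAt_id t).mul (((hasDerivAt_id t).const_sub 1).pow 2)).congr_deriv
        (by simp; ring)
    have hv : HasDerivAt (fun t : ℝ ↦ t ^ 3 - t ^ 2) (t * (3 * t - 2)) t :=
      ((hasDerivAt_pow 3 t).sub (hasDerivAt_pow 2 t)).congr_deriv (by norm_num; ring)
    exact (((hu.smul_const u).add (hv.smul_const v)).const_add p).deriv
  refine ⟨γ, 1, ⟨one_pos, by fun_prop, by simp [γ], by simp [deriv_γ], by simp [γ],
    by norm_num [deriv_γ], fun t _ ht ↦ ?_⟩, mapsTo_univ _ _⟩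
  rw [deriv_γ] at ht
  obtain ⟨hut, hvt⟩ := LinearIndependent.pair_iff.1 h _ _ ht
  rcases mul_eq_zero.1 hut with _ | _ <;> rcases mul_eq_zero.1 hvt with _ | _ <;> linarith

theorem loop_of_one_lt_rank (hE : 1 < Module.rank ℝ E) (hK : IsOpen K) (hp : p ∈ K)
    (hu : u ≠ 0) (hv : v ≠ 0) : RegularlyJoinedIn K p u p v := by
  refine of_univ_of_isOpen ?_ hK hp
  by_cases huv : LinearIndependent ℝ ![u, v]
  · exact loop_of_linearIndependent huv p
  obtain ⟨c, rfl⟩ : ∃ c : ℝ, c • u = v := by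
    simpa [LinearIndependent.pair_iff' hu] using huv
  obtain ⟨w, huw⟩ := exists_linearIndependent_pair_of_one_lt_rank hE hu
  have hwv : LinearIndependent ℝ ![w, c • u] := by
    rw [LinearIndependent.pair_symm_iff, LinearIndependent.pair_iff' hv]
    intro d
    rw [smul_smul]
    exact (LinearIndependent.pair_iff' hu).1 huw _
  exact (loop_of_linearIndependent huw p).trans (loop_of_linearIndependent hwv p) (mem_univ p)

theorem of_isPreconnected (hE : 1 < Module.rank ℝ E) (hK : IsOpen K) (hKc : IsPreconnected K)
    (hp : p ∈ K) (hq : q ∈ K) (hu : u ≠ 0) (hv : v ≠ 0) : RegularlyJoinedIn K p u q v := by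
  suffices ∀ u v : E, u ≠ 0 → v ≠ 0 → RegularlyJoinedIn K p u q v from this u v hu hv
  refine hKc.induction₂' (fun p q ↦ ∀ u v : E, u ≠ 0 → v ≠ 0 → RegularlyJoinedIn K p u q v)
    (fun x hx ↦ ?_) (fun x y z _ hy _ hxy hyz u v hu hv ↦ (hxy u v hu hv).trans (hyz v v hv hv) hy)
    hp hq
  obtain ⟨ε, hε, hball⟩ := Metric.isOpen_iff.1 hK x hx
  have joined_in_ball : ∀ y ∈ ball x ε, ∀ z ∈ ball x ε, ∀ u v : E, u ≠ 0 → v ≠ 0 →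
      RegularlyJoinedIn K y u z v := by
    intro y hy z hz u v hu hv
    rcases eq_or_ne y z with rfl | hyz
    · exact loop_of_one_lt_rank hE hK (hball hy) hu hv
    have hzy : z - y ≠ 0 := sub_ne_zero.2 hyz.symm
    have hseg : RegularlyJoinedIn K y (z - y) z (z - y) :=
      of_openSegment one_pos hzy (by simp)
        (((convex_ball x ε).openSegment_subset hy hz).trans hball)
    exact ((loop_of_one_lt_rank hE hK (hball hy) hu hzy).trans hseg (hball hy)).trans
      (loop_of_one_lt_rank hE hK (hball hz) hzy hv) (hball hz)
  filter_upwards [mem_nhdsWithin_of_mem_nhds (ball_mem_nhds x hε)] with y hy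
  exact ⟨joined_in_ball x (mem_ball_self hε) y hy, joined_in_ball y hy x (mem_ball_self hε)⟩

end RegularlyJoinedIn

theorem convex_of_isPreconnected_of_finrank_eq_one (hE : Module.finrank ℝ E = 1) {K : Set E}
    (hK : IsPreconnected K) : Convex ℝ K := by
  have : FiniteDimensional ℝ E := Module.finite_of_finrank_eq_succ hE
  let e : E ≃L[ℝ] ℝ := ContinuousLinearEquiv.ofFinrankEq (by simpa using hE)
  have himage : Convex ℝ (e '' K) := (hK.image e e.continuous.continuousOn).convex
  rw [← preimage_image_eq K e.injective]
  exact himage.is_linear_preimage e.toLinearMap.isLinear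

namespace RegularlyJoinedIn

variable {K : Set E} {a n u z : E}

theorem of_eventually_sub_smul_mem_of_one_lt_rank (hE : 1 < Module.rank ℝ E) (hK : IsOpen K)
    (hKc : IsPreconnected K) (ha : a ∈ K) (hu : u ≠ 0) (hn : n ≠ 0)
    (h : ∀ᶠ s : ℝ in 𝓝[>] 0, z - s • n ∈ K) : RegularlyJoinedIn K a u z n := by
  obtain ⟨δ, hδ : 0 < δ, hδK⟩ := mem_nhdsGT_iff_exists_Ioc_subset.1 h
  have hδ_mem : z - δ • n ∈ K := hδK ⟨hδ, le_rfl⟩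
  have hseg : openSegment ℝ (z - δ • n) z ⊆ K := by
    rw [openSegment_symm, openSegment_eq_image']
    rintro _ ⟨θ, hθ, rfl⟩
    have : z - (θ * δ) • n ∈ K := hδK ⟨mul_pos hθ.1 hδ, mul_le_of_le_one_left hδ.le hθ.2.le⟩
    simpa [smul_smul, ← sub_eq_add_neg] using this
  exact (of_isPreconnected hE hK hKc ha hδ_mem hu hn).trans
    (of_openSegment hδ hn (sub_add_cancel z _) hseg) hδ_mem

theorem of_eventually_sub_smul_mem_of_finrank_eq_one (hE : Module.finrank ℝ E = 1)
    (hK : IsOpen K) (hKc : IsPreconnected K) (ha : a ∈ K) (hz : z ∉ K) (hn : n ≠ 0)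
    (h : ∀ᶠ s : ℝ in 𝓝[>] 0, z - s • n ∈ K) : RegularlyJoinedIn K a n z n := by
  have hconv := convex_of_isPreconnected_of_finrank_eq_one hE hKc
  obtain ⟨s, hs⟩ := (finrank_eq_one_iff_of_nonzero' n hn).1 hE (z - a)
  have hs_pos : 0 < s := by
    obtain ⟨δ, hδK, hδ : 0 < δ⟩ := (h.and self_mem_nhdsWithin).exists
    by_contra! hs_nonpos
    have hz_seg : z ∈ segment ℝ (z - δ • n) a := by
      rw [mem_segment_iff_sameRay, sub_sub_cancel, ← neg_sub z a, ← hs, ← neg_smul]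
      exact ((SameRay.refl n).nonneg_smul_left hδ.le).nonneg_smul_right (neg_nonneg.2 hs_nonpos)
    exact hz (hconv.segment_subset hδK ha hz_seg)
  have hz_closure : z ∈ closure K := by
    have : Tendsto (fun s : ℝ ↦ z - s • n) (𝓝[>] 0) (𝓝 z) :=
      tendsto_nhdsWithin_of_tendsto_nhds (Continuous.tendsto' (by fun_prop) _ _ (by simp))
    exact mem_closure_of_tendsto this h
  have hseg : openSegment ℝ a z ⊆ K := by
    have := hconv.openSegment_interior_closure_subset_interior
      (hK.interior_eq.symm ▸ ha) hz_closure
    rwa [hK.interior_eq] at this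
  exact of_openSegment hs_pos hn (by simp [hs]) hseg

theorem of_eventually_sub_smul_mem (hK : IsOpen K) (hKc : IsPreconnected K) (ha : a ∈ K)
    (hz : z ∉ K) (hn : n ≠ 0) (h : ∀ᶠ s : ℝ in 𝓝[>] 0, z - s • n ∈ K) :
    RegularlyJoinedIn K a n z n := by
  rcases lt_or_ge 1 (Module.rank ℝ E) with hE | hE
  · exact of_eventually_sub_smul_mem_of_one_lt_rank hE hK hKc ha hn hn h
  · have : Nontrivial E := ⟨n, 0, hn⟩
    have hE_eq : Module.finrank ℝ E = 1 := Module.rank_eq_one_iff_finrank_eq_one.1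
      (hE.antisymm (Cardinal.one_le_iff_pos.2 rank_pos))
    exact of_eventually_sub_smul_mem_of_finrank_eq_one hE_eq hK hKc ha hz hn h

end RegularlyJoinedIn

theorem exists_isRegularArc_crossing {A B : Set E} (hA : IsOpen A) (hB : IsOpen B)
    (hAc : IsPreconnected A) (hBc : IsPreconnected B) {a b z n : E} (ha : a ∈ A) (hb : b ∈ B)
    (hzA : z ∉ A) (hzB : z ∉ B) (hn : n ≠ 0) (hnA : ∀ᶠ s : ℝ in 𝓝[>] 0, z - s • n ∈ A)
    (hnB : ∀ᶠ s : ℝ in 𝓝[>] 0, z + s • n ∈ B) :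
    ∃ γ : ℝ → E, ∃ t₀ ∈ Ioo (0 : ℝ) 1, ∃ c > (0 : ℝ), IsRegularArc γ 1 a (c • n) b (c • n) ∧
      γ t₀ = z ∧ deriv γ t₀ = c • n ∧ MapsTo γ (Ico 0 t₀) A ∧ MapsTo γ (Ioc t₀ 1) B := by
  obtain ⟨γ₁, T₁, h₁, h₁A⟩ := RegularlyJoinedIn.of_eventually_sub_smul_mem hA hAc ha hzA hn hnA
  obtain ⟨γ₂, T₂, h₂, h₂B⟩ : RegularlyJoinedIn B z n b n := by
    simpa using (RegularlyJoinedIn.of_eventually_sub_smul_mem hB hBc hb hzB (neg_ne_zero.2 hn)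
      (by simpa using hnB)).symm
  obtain ⟨γ, hγ, hderiv, hl, hr⟩ := h₁.exists_concat h₂
  have hT₁ := h₁.pos
  have hT₂ := h₂.pos
  have hT := hγ.pos
  have hγ_scaled := hγ.comp_mul_left hT
  rw [div_self hT.ne'] at hγ_scaled
  have mul_t₀ : (T₁ + T₂) * (T₁ / (T₁ + T₂)) = T₁ := mul_div_cancel₀ _ hT.ne'
  refine ⟨_, T₁ / (T₁ + T₂), ⟨by positivity, (div_lt_one hT).2 (by linarith)⟩, _, hT, hγ_scaled,
    ?_, ?_, fun t ht ↦ ?_, fun t ht ↦ ?_⟩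
  · rw [mul_t₀, hl _ le_rfl, h₁.target]
  · rw [deriv_comp_mul_left, mul_t₀, hderiv]
  · have htT : (T₁ + T₂) * t < T₁ := (lt_div_iff₀' hT).1 ht.2
    change γ _ ∈ A
    rw [hl _ htT.le]
    rcases ht.1.eq_or_lt with rfl | ht₀
    · rwa [mul_zero, h₁.source]
    · exact h₁A ⟨mul_pos hT ht₀, htT⟩
  · have htT : T₁ < (T₁ + T₂) * t := (div_lt_iff₀' hT).1 ht.1
    change γ _ ∈ B
    rw [hr _ htT.le]
    rcases ht.2.eq_or_lt with rfl | ht₁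
    · rwa [mul_one, add_sub_cancel_left, h₂.target]
    · exact h₂B ⟨sub_pos.2 htT, by linarith [mul_lt_of_lt_one_right hT ht₁]⟩

end RegularCurves

section LocalSides

variable {E : Type*} [NormedAddCommGroup E] [NormedSpace ℝ E] {f : E → ℝ} {f' : E →L[ℝ] ℝ}
  {z n : E} {A B : Set E}

theorem eventually_add_mul_le_of_lt_apply (hf : HasStrictFDerivAt f f' z) {c : ℝ}
    (hc : c < f' n) :
    ∀ᶠ p : E × ℝ in 𝓝 (z, 0), 0 ≤ p.2 → f p.1 + c * p.2 ≤ f (p.1 + p.2 • n) := by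
  have tendsto : Tendsto (fun p : E × ℝ ↦ (p.1 + p.2 • n, p.1)) (𝓝 (z, 0)) (𝓝 (z, z)) :=
    Continuous.tendsto' (by fun_prop) _ _ (by simp)
  have isBigO : (fun p : E × ℝ ↦ p.1 + p.2 • n - p.1) =O[𝓝 (z, 0)] fun p ↦ p.2 :=
    .of_bound ‖n‖ (.of_forall fun p ↦ by simp [norm_smul, mul_comm])
  filter_upwards [((hf.isLittleO.comp_tendsto tendsto).trans_isBigO isBigO).bound
    (sub_pos.2 hc)] with p hp hs
  simp only [Function.comp_apply, add_sub_cancel_left, map_smul, smul_eq_mul, Real.norm_eq_abs,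
    abs_of_nonneg hs] at hp
  linarith [neg_le_of_abs_le hp]

theorem isPreconnected_setOf_exists_add_smul_eq {K : Set E} (hK : IsConnected K) (D : Set E)
    (n : E) {δ : ℝ} (hδ : 0 ≤ δ) :
    IsPreconnected {y | ∃ x ∈ K, ∃ s ∈ Icc 0 δ, (x ∈ D ∨ s = δ) ∧ x + s • n = y} := by
  obtain ⟨z, hz⟩ := hK.nonempty
  refine isPreconnected_of_forall (z + δ • n) ?_
  rintro _ ⟨x, hx, s, hs, hxs, rfl⟩
  refine ⟨(· + δ • n) '' K ∪ (fun t : ℝ ↦ x + t • n) '' Icc s δ, ?_,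
    .inl ⟨z, hz, rfl⟩, .inr ⟨s, left_mem_Icc.2 hs.2, rfl⟩,
    .union (x + δ • n) ⟨x, hx, rfl⟩ ⟨δ, right_mem_Icc.2 hs.2, rfl⟩
      (hK.isPreconnected.image _ (by fun_prop)) (isPreconnected_Icc.image _ (by fun_prop))⟩
  rintro _ (⟨w, hw, rfl⟩ | ⟨t, ht, rfl⟩)
  · exact ⟨w, hw, δ, right_mem_Icc.2 hδ, .inr rfl, rfl⟩
  · exact ⟨x, hx, t, ⟨hs.1.trans ht.1, ht.2⟩,
      hxs.imp_right fun h ↦ ht.2.antisymm (h.ge.trans ht.1), rfl⟩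

theorem exists_isPreconnected_eventually_mem_of_pos (hf : HasStrictFDerivAt f f' z)
    (hf' : f' ≠ 0) (hz : f z = 0) {V : Set E} (hV : V ∈ 𝓝 z) :
    ∃ C ⊆ V, IsPreconnected C ∧ (∀ x ∈ C, 0 < f x) ∧ ∀ᶠ x in 𝓝 z, 0 < f x → x ∈ C := by
  obtain ⟨n, hn⟩ : ∃ n, 0 < f' n := by
    obtain ⟨n, hn⟩ := LinearMap.surjective (f := f'.toLinearMap) (by exact_mod_cast hf') 1
    exact ⟨n, zero_lt_one.trans_eq hn.symm⟩
  obtain ⟨c, hc, hcn⟩ := exists_between hn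
  have add_smul_mem : ∀ᶠ p : E × ℝ in 𝓝 (z, 0), p.1 + p.2 • n ∈ V :=
    Tendsto.eventually_mem (Continuous.tendsto' (by fun_prop) _ _ (by simp)) hV
  obtain ⟨W, hW, I, hI, hWI⟩ := mem_nhds_prod_iff.1
    ((eventually_add_mul_le_of_lt_apply hf hcn).and add_smul_mem)
  obtain ⟨δ, hδ, hδI⟩ := Metric.nhds_basis_closedBall.mem_iff.1 hI
  have mul_lt : ∀ᶠ x in 𝓝 z, -(c * δ) < f x :=
    hf.continuousAt.eventually_const_lt (by rw [hz]; exact neg_neg_of_pos (mul_pos hc hδ))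
  obtain ⟨ρ, hρ, hball⟩ := Metric.mem_nhds_iff.1 (inter_mem hW mul_lt)
  have hgrowth {x : E} (hx : x ∈ ball z ρ) {s : ℝ} (hs : s ∈ Icc 0 δ) :
      f x + c * s ≤ f (x + s • n) ∧ x + s • n ∈ V := by
    have := hWI (mk_mem_prod (hball hx).1
      (hδI (by simpa [abs_of_nonneg hs.1] using hs.2 : s ∈ closedBall 0 δ)))
    exact ⟨this.1 hs.1, this.2⟩
  have ball_isConnected : IsConnected (ball z ρ) :=
    (convex_ball z ρ).isConnected ⟨z, mem_ball_self hρ⟩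
  refine ⟨_, ?_, isPreconnected_setOf_exists_add_smul_eq ball_isConnected {x | 0 < f x} n hδ.le,
    ?_, ?_⟩
  · rintro _ ⟨x, hx, s, hs, -, rfl⟩
    exact (hgrowth hx hs).2
  · rintro _ ⟨x, hx, s, hs, hxs, rfl⟩
    refine lt_of_lt_of_le ?_ (hgrowth hx hs).1
    rcases hxs with hfx | rfl
    · exact add_pos_of_pos_of_nonneg hfx (mul_nonneg hc.le hs.1)
    · exact neg_lt_iff_pos_add.1 (hball hx).2
  · filter_upwards [ball_mem_nhds z hρ] with x hx hfx
    exact ⟨x, hx, 0, left_mem_Icc.2 hδ.le, .inl hfx, by simp⟩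

theorem eventually_mem_or_eventually_mem_of_pos (hf : HasStrictFDerivAt f f' z) (hf' : f' ≠ 0)
    (hz : f z = 0) (hA : IsOpen A) (hB : IsOpen B) (hAB : Disjoint A B)
    (h : ∀ᶠ x in 𝓝 z, 0 < f x → x ∈ A ∪ B) :
    (∀ᶠ x in 𝓝 z, 0 < f x → x ∈ A) ∨ ∀ᶠ x in 𝓝 z, 0 < f x → x ∈ B := by
  obtain ⟨C, hCV, hC, hC_pos, hC_mem⟩ := exists_isPreconnected_eventually_mem_of_pos hf hf' hz h
  refine (hC.subset_or_subset hA hB hAB fun x hx ↦ hCV hx (hC_pos x hx)).imp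
    (fun hCA ↦ ?_) fun hCB ↦ ?_
  · exact hC_mem.mono fun x hx hfx ↦ hCA (hx hfx)
  · exact hC_mem.mono fun x hx hfx ↦ hCB (hx hfx)

theorem eventually_mem_sides_of_mem_closure (hf : HasStrictFDerivAt f f' z) (hf' : f' ≠ 0)
    (hz : f z = 0) (hA : IsOpen A) (hB : IsOpen B) (hAB : Disjoint A B)
    (h : ∀ᶠ x in 𝓝 z, x ∈ A ∪ B ↔ f x ≠ 0) (hzA : z ∈ closure A) (hzB : z ∈ closure B) :
    (∀ᶠ x in 𝓝 z, (f x < 0 → x ∈ A) ∧ (0 < f x → x ∈ B)) ∨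
      ∀ᶠ x in 𝓝 z, (f x < 0 → x ∈ B) ∧ (0 < f x → x ∈ A) := by
  have one_sided {C D : Set E} (hCD : Disjoint C D) (hzD : z ∈ closure D)
      (hD : ∀ᶠ x in 𝓝 z, x ∈ D → f x ≠ 0) (hneg : ∀ᶠ x in 𝓝 z, f x < 0 → x ∈ C)
      (hpos : ∀ᶠ x in 𝓝 z, 0 < f x → x ∈ C) : False := by
    obtain ⟨x, hxD, hfx, hxneg, hxpos⟩ :=
      ((mem_closure_iff_frequently.1 hzD).and_eventually (hD.and (hneg.and hpos))).exists
    exact disjoint_left.1 hCD ((hfx hxD).lt_or_gt.elim hxneg hxpos) hxD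
  have hpos := eventually_mem_or_eventually_mem_of_pos hf hf' hz hA hB hAB
    (h.mono fun x hx hfx ↦ hx.2 hfx.ne')
  have hneg := eventually_mem_or_eventually_mem_of_pos (f := -f) hf.neg (neg_ne_zero.2 hf')
    (by simp [hz]) hA hB hAB (h.mono fun x hx hfx ↦ hx.2 (neg_pos.1 hfx).ne)
  simp only [Pi.neg_apply, neg_pos] at hneg
  rcases hneg with hneg | hneg <;> rcases hpos with hpos | hpos
  · exact (one_sided hAB hzB (h.mono fun x hx hxB ↦ hx.1 (.inr hxB)) hneg hpos).elim
  · exact .inl (hneg.and hpos)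
  · exact .inr (hneg.and hpos)
  · exact (one_sided hAB.symm hzA (h.mono fun x hx hxA ↦ hx.1 (.inl hxA)) hneg hpos).elim

theorem eventually_neg_sub_smul_and_pos_add_smul (hf : HasFDerivAt f f' z) (hz : f z = 0)
    (hn : 0 < f' n) : ∀ᶠ s : ℝ in 𝓝[>] 0, f (z - s • n) < 0 ∧ 0 < f (z + s • n) := by
  have hderiv : 0 < deriv (fun s : ℝ ↦ f (z + s • n)) 0 := (hf.hasLineDerivAt n).deriv.symm ▸ hn
  have hsign : ∀ᶠ s : ℝ in 𝓝 0, SignType.sign (f (z + s • n)) = SignType.sign s := by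
    filter_upwards [eventually_nhdsWithin_sign_eq_of_deriv_pos hderiv (by simpa using hz)]
      with s hs
    rwa [sub_zero] at hs
  have hsign_neg := (continuous_neg.tendsto' (0 : ℝ) 0 neg_zero).eventually hsign
  filter_upwards [nhdsWithin_le_nhds hsign, nhdsWithin_le_nhds hsign_neg, self_mem_nhdsWithin]
    with s hs hs_neg (hs_pos : 0 < s)
  rw [sign_pos hs_pos, sign_eq_one_iff] at hs
  rw [sign_neg (neg_neg_of_pos hs_pos), sign_eq_neg_one_iff, neg_smul, ← sub_eq_add_neg] at hs_neg
  exact ⟨hs_neg, hs⟩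

theorem exists_ne_zero_eventually_sub_smul_mem_and_add_smul_mem (hf : HasStrictFDerivAt f f' z)
    (hz : f z = 0) (hn : 0 < f' n) (hA : IsOpen A) (hB : IsOpen B) (hAB : Disjoint A B)
    (h : ∀ᶠ x in 𝓝 z, x ∈ A ∪ B ↔ f x ≠ 0) (hzA : z ∈ closure A) (hzB : z ∈ closure B) :
    ∃ c : ℝ, c ≠ 0 ∧ (∀ᶠ s : ℝ in 𝓝[>] 0, z - s • c • n ∈ A) ∧
      ∀ᶠ s : ℝ in 𝓝[>] 0, z + s • c • n ∈ B := by
  have hf' : f' ≠ 0 := fun hf' ↦ hn.ne' (by simp [hf'])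
  have tendsto_add : Tendsto (fun s : ℝ ↦ z + s • n) (𝓝[>] 0) (𝓝 z) :=
    tendsto_nhdsWithin_of_tendsto_nhds (Continuous.tendsto' (by fun_prop) _ _ (by simp))
  have tendsto_sub : Tendsto (fun s : ℝ ↦ z - s • n) (𝓝[>] 0) (𝓝 z) :=
    tendsto_nhdsWithin_of_tendsto_nhds (Continuous.tendsto' (by fun_prop) _ _ (by simp))
  have hsign := eventually_neg_sub_smul_and_pos_add_smul hf.hasFDerivAt hz hn
  rcases eventually_mem_sides_of_mem_closure hf hf' hz hA hB hAB h hzA hzB with hside | hside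
  · refine ⟨1, one_ne_zero, ?_, ?_⟩
    · filter_upwards [hsign, tendsto_sub.eventually hside] with s hs hsA
      simpa using hsA.1 hs.1
    · filter_upwards [hsign, tendsto_add.eventually hside] with s hs hsB
      simpa using hsB.2 hs.2
  · refine ⟨-1, by norm_num, ?_, ?_⟩
    · filter_upwards [hsign, tendsto_add.eventually hside] with s hs hsA
      simpa using hsA.2 hs.2
    · filter_upwards [hsign, tendsto_sub.eventually hside] with s hs hsB
      simpa [sub_eq_add_neg] using hsB.1 hs.1

end LocalSides

theorem stmt17_general {E : Type*} [NormedAddCommGroup E] [InnerProductSpace ℝ E]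
    [CompleteSpace E] {A B S : Set E} (hA : IsOpen A) (hB : IsOpen B) (hAc : IsPreconnected A)
    (hBc : IsPreconnected B) (hAB : Disjoint A B) {f : E → ℝ}
    (hS : ∃ U, IsOpen U ∧ S = U ∩ {x | f x = 0}) (hS_frontier : S ⊆ frontier A ∩ frontier B)
    {z : E} (hz : z ∈ S) (hf : ContDiffAt ℝ 1 f z) (hfz : gradient f z ≠ 0)
    (hz_sides : ∃ ε > 0, ball z ε \ S ⊆ A ∪ B) {a b : E} (ha : a ∈ A) (hb : b ∈ B) :
    ∃ γ γ' : ℝ → E,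
      γ 0 = a ∧ γ 1 = b ∧
      (∀ t ∈ Icc (0 : ℝ) 1, HasDerivWithinAt γ (γ' t) (Icc 0 1) t) ∧
      ContinuousOn γ' (Icc 0 1) ∧
      (∀ t ∈ Icc (0 : ℝ) 1, γ' t ≠ 0) ∧
      (∀ t ∈ Icc (0 : ℝ) 1, γ t ∈ A ∪ S ∪ B) ∧
      (∃! t₀ : ℝ, t₀ ∈ Icc (0 : ℝ) 1 ∧ γ t₀ ∈ S) ∧
      (∀ t ∈ Icc (0 : ℝ) 1, γ t ∈ S →
        ∃ c : ℝ, c ≠ 0 ∧ γ' t = c • gradient f (γ t)) := by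
  have notMem_A {x : E} (hx : x ∈ S) : x ∉ A := (hA.frontier_eq ▸ (hS_frontier hx).1).2
  have notMem_B {x : E} (hx : x ∈ S) : x ∉ B := (hB.frontier_eq ▸ (hS_frontier hx).2).2
  obtain ⟨U, hU, hSU⟩ := hS
  have mem_sides_iff : ∀ᶠ x in 𝓝 z, x ∈ A ∪ B ↔ f x ≠ 0 := by
    obtain ⟨ε, hε, hball⟩ := hz_sides
    filter_upwards [hU.mem_nhds (hSU.subset hz).1, ball_mem_nhds z hε] with x hxU hxε
    have mem_S_iff : x ∈ S ↔ f x = 0 := by rw [hSU]; exact and_iff_right hxU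
    rw [ne_eq, ← mem_S_iff]
    exact ⟨fun hx hxS ↦ hx.elim (notMem_A hxS) (notMem_B hxS), fun hxS ↦ hball ⟨hxε, hxS⟩⟩
  have fderiv_gradient_pos : 0 < fderiv ℝ f z (gradient f z) :=
    inner_gradient_left (𝕜 := ℝ) (f := f) ▸ real_inner_self_pos.2 hfz
  obtain ⟨d, hd, hdA, hdB⟩ := exists_ne_zero_eventually_sub_smul_mem_and_add_smul_mem
    (hf.hasStrictFDerivAt one_ne_zero) (hSU.subset hz).2 fderiv_gradient_pos hA hB hAB
    mem_sides_iff (frontier_subset_closure (hS_frontier hz).1)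
    (frontier_subset_closure (hS_frontier hz).2)
  obtain ⟨γ, t₀, ht₀, c, hc, hγ, hγz, hγ', hγA, hγB⟩ := exists_isRegularArc_crossing hA hB hAc hBc
    ha hb (notMem_A hz) (notMem_B hz) (smul_ne_zero hd hfz) hdA hdB
  have eq_t₀ {t : ℝ} (ht : t ∈ Icc (0 : ℝ) 1) (htS : γ t ∈ S) : t = t₀ := by
    rcases lt_trichotomy t t₀ with h | h | h
    · exact (notMem_A htS (hγA ⟨ht.1, h⟩)).elim
    · exact h
    · exact (notMem_B htS (hγB ⟨h, ht.2⟩)).elim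
  refine ⟨γ, deriv γ, hγ.source, hγ.target, fun t _ ↦ (hγ.hasDerivAt t).hasDerivWithinAt,
    (hγ.contDiff.continuous_deriv le_rfl).continuousOn, hγ.deriv_ne_zero, fun t ht ↦ ?_,
    ⟨t₀, ⟨Ioo_subset_Icc_self ht₀, hγz.symm ▸ hz⟩, fun t ht ↦ eq_t₀ ht.1 ht.2⟩,
    fun t ht htS ↦ ⟨c * d, mul_ne_zero hc.ne' hd, ?_⟩⟩
  · rcases lt_trichotomy t t₀ with h | rfl | h
    · exact .inl (.inl (hγA ⟨ht.1, h⟩))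
    · exact .inl (.inr (hγz.symm ▸ hz))
    · exact .inr (hγB ⟨h, ht.2⟩)
  · rw [eq_t₀ ht htS, hγz, hγ', smul_smul]

/-- given disjoint connected open sets `A`, `B` and an open
connected piece `S` of a smooth regular hypersurface with `S ⊆ ∂A ∩ ∂B`,
locally two-sided with sides in `A` and `B`, any `a ∈ A` and `b ∈ B` can be
joined by a `C¹` regular curve in `A ∪ S ∪ B` crossing `S` exactly once and
orthogonally. -/
theorem stmt17 {N : ℕ}
    (A B : Set (EuclideanSpace ℝ (Fin N)))
    (hAopen : IsOpen A) (hBopen : IsOpen B)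
    (hAconn : IsConnected A) (hBconn : IsConnected B)
    (hdisj : Disjoint A B)
    (f : EuclideanSpace ℝ (Fin N) → ℝ) (hf : ContDiff ℝ (⊤ : ℕ∞) f)
    (S : Set (EuclideanSpace ℝ (Fin N))) (hSne : S.Nonempty)
    (hSconn : IsConnected S)
    (hSlevel : S ⊆ {x | f x = 0}) (hSreg : ∀ z ∈ S, gradient f z ≠ 0)
    (hSrelopen : ∃ U, IsOpen U ∧ S = U ∩ {x | f x = 0})
    (hSfront : S ⊆ frontier A ∩ frontier B)
    (htwosided : ∀ z ∈ S, ∃ ε > 0, ball z ε \ S ⊆ A ∪ B)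
    (a b : EuclideanSpace ℝ (Fin N)) (ha : a ∈ A) (hb : b ∈ B) :
    ∃ (γ : ℝ → EuclideanSpace ℝ (Fin N)) (γ' : ℝ → EuclideanSpace ℝ (Fin N)),
      γ 0 = a ∧ γ 1 = b ∧
      (∀ t ∈ Icc (0 : ℝ) 1, HasDerivWithinAt γ (γ' t) (Icc 0 1) t) ∧
      ContinuousOn γ' (Icc 0 1) ∧
      (∀ t ∈ Icc (0 : ℝ) 1, γ' t ≠ 0) ∧
      (∀ t ∈ Icc (0 : ℝ) 1, γ t ∈ A ∪ S ∪ B) ∧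
      (∃! t₀ : ℝ, t₀ ∈ Icc (0 : ℝ) 1 ∧ γ t₀ ∈ S) ∧
      (∀ t ∈ Icc (0 : ℝ) 1, γ t ∈ S →
        ∃ c : ℝ, c ≠ 0 ∧ γ' t = c • gradient f (γ t)) := by
  obtain ⟨z, hz⟩ := hSne
  exact stmt17_general hAopen hBopen hAconn.isPreconnected hBconn.isPreconnected hdisj hSrelopen
    hSfront hz (hf.of_le (by exact_mod_cast le_top)).contDiffAt (hSreg z hz) (htwosided z hz) ha hb
end
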